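/- arXiv:2509.21581 — 2 statements merged into one kernel-verified Lean document; each statement's English description precedes it below -/
import Mathlib

section
/- Let β be a real number and let f₋ : ℝ² → ℂ be the function f₋(ρ) = (1−i)·e^{β/2}·exp(−iπ‖ρ‖²) + (1+i)·e^{−β/2}·exp(iπ‖ρ‖²). Then for every ρ' ∈ ℝ², the Gaussian-regularized value of K_β[f₋](ρ') equals −i·e^β·f₋(ρ'). In other words, f₋ is an eigenfunction of the hyperbolic fractional Fourier transformation of the second kind K_β with eigenvalue −i·e^β. -/
open MeasureTheory Filter
open scoped RealInnerProductSpace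

noncomputable section

/-- The Euclidean plane `ℝ²`. -/
abbrev Plane := EuclideanSpace ℝ (Fin 2)

/-- Gaussian-regularized hyperbolic fractional Fourier transformation of the second kind:
the integrand carries the extra factor `exp (-π ε ‖ρ‖²)`. -/
def fracKreg (β ε : ℝ) (f : Plane → ℂ) (ρ' : Plane) : ℂ :=
  Complex.I * Real.exp β / Real.cosh β *
    Complex.exp (Complex.I * Real.pi * ‖ρ'‖ ^ 2 * Real.tanh β) *
    ∫ ρ : Plane,
      Complex.exp (-(Real.pi * ε * ‖ρ‖ ^ 2 : ℝ)) *
      Complex.exp (-(Complex.I * Real.pi * ‖ρ‖ ^ 2 * Real.tanh β)) *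
      Complex.exp (2 * Real.pi * Complex.I * ⟪ρ', ρ⟫ / Real.cosh β) * f ρ

/-!
Write `g_a(ρ) = exp (-πa‖ρ‖²)` for complex `a` with `0 ≤ re a`. The regularized kernel of `K_β`
times `g_a` is a Gaussian of parameter `ε + i tanh β + a` times a plane wave, so its integral is
explicit and the limit `ε → 0⁺` shows that `K_β` acts on the parameter `a` by a Möbius
transformation, up to a scalar. The parameters `±i` are exchanged: `K_β g_i = g_{-i}` and
`K_β g_{-i} = -e^{2β} g_i`. Hence `μ g_i + g_{-i}` is an eigenfunction with eigenvalue `μ` whenever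
`μ² = -e^{2β}`, and `f₋` is `(1 + i) e^{-β/2}` times this eigenfunction for `μ = -i e^β`.
-/

/-- The Gaussian `v ↦ exp (-πa‖v‖²)` with complex parameter `a`, a unimodular chirp when `a` is
purely imaginary. Both summands of the eigenfunctions of `K_β` are of this form, with `a = ±i`. -/
def complexGaussian {E : Type*} [Norm E] (a : ℂ) (v : E) : ℂ :=
  Complex.exp (-(Real.pi * a * ‖v‖ ^ 2))

section ComplexGaussian

variable {E : Type*} [Norm E]

lemma complexGaussian_mul (a b : ℂ) (v : E) :
    complexGaussian a v * complexGaussian b v = complexGaussian (a + b) v := by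
  simp only [complexGaussian, ← Complex.exp_add]
  ring_nf

lemma complexGaussian_I (v : E) :
    complexGaussian Complex.I v = Complex.exp (-(Complex.I * Real.pi * ‖v‖ ^ 2)) := by
  rw [complexGaussian, mul_comm (Real.pi : ℂ)]

lemma complexGaussian_neg_I (v : E) :
    complexGaussian (-Complex.I) v = Complex.exp (Complex.I * Real.pi * ‖v‖ ^ 2) := by
  rw [complexGaussian, mul_neg, neg_mul, neg_neg, mul_comm (Real.pi : ℂ)]

lemma continuous_complexGaussian_param (v : E) : Continuous fun a : ℂ => complexGaussian a v := by
  unfold complexGaussian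
  fun_prop

lemma tendsto_one_div_mul_complexGaussian {d : ℂ} (hd : d ≠ 0) (c : ℂ) (v : E) :
    Tendsto (fun ε : ℝ => 1 / (ε + d) * complexGaussian (c / (ε + d)) v)
      (nhdsWithin 0 (Set.Ioi 0)) (nhds (1 / d * complexGaussian (c / d) v)) := by
  have hparam : Tendsto (fun ε : ℝ => (ε : ℂ) + d) (nhdsWithin 0 (Set.Ioi 0)) (nhds d) := by
    have hcont : Continuous fun ε : ℝ => (ε : ℂ) + d := by fun_prop
    simpa using (hcont.tendsto 0).mono_left nhdsWithin_le_nhds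
  exact (tendsto_const_nhds.div hparam hd).mul
    (((continuous_complexGaussian_param v).tendsto _).comp (tendsto_const_nhds.div hparam hd))

variable {V : Type*} [NormedAddCommGroup V] [InnerProductSpace ℝ V]

lemma complexGaussian_mul_planeWave (a κ : ℂ) (w v : V) :
    complexGaussian a v * Complex.exp (2 * Real.pi * Complex.I * κ * ⟪w, v⟫) =
      Complex.exp (-(Real.pi * a) * ‖v‖ ^ 2 + 2 * Real.pi * Complex.I * κ * ⟪w, v⟫) := by
  rw [complexGaussian, ← Complex.exp_add, neg_mul]

lemma re_pi_mul_pos {a : ℂ} (ha : 0 < a.re) : 0 < (Real.pi * a).re :=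
  (Complex.re_ofReal_mul _ _).symm ▸ mul_pos Real.pi_pos ha

variable [FiniteDimensional ℝ V] [MeasurableSpace V] [BorelSpace V]

lemma integrable_complexGaussian_mul_planeWave {a : ℂ} (ha : 0 < a.re) (κ : ℂ) (w : V) :
    Integrable fun v : V =>
      complexGaussian a v * Complex.exp (2 * Real.pi * Complex.I * κ * ⟪w, v⟫) := by
  simp only [complexGaussian_mul_planeWave]
  exact GaussianFourier.integrable_cexp_neg_mul_sq_norm_add (re_pi_mul_pos ha) _ w

lemma integral_complexGaussian_mul_planeWave {a : ℂ} (ha : 0 < a.re) (κ : ℂ) (w : V) :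
    ∫ v : V, complexGaussian a v * Complex.exp (2 * Real.pi * Complex.I * κ * ⟪w, v⟫) =
      (1 / a) ^ (Module.finrank ℝ V / 2 : ℂ) * complexGaussian (κ ^ 2 / a) w := by
  have hπ : (Real.pi : ℂ) ≠ 0 := Complex.ofReal_ne_zero.mpr Real.pi_ne_zero
  have ha₀ : a ≠ 0 := Complex.ne_zero_of_re_pos ha
  simp only [complexGaussian_mul_planeWave]
  rw [GaussianFourier.integral_cexp_neg_mul_sq_norm_add (re_pi_mul_pos ha), complexGaussian]
  congr 2
  · field_simp
  · field_simp
    linear_combination κ ^ 2 * ‖w‖ ^ 2 * 4 * Complex.I_sq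

end ComplexGaussian

/-- The integral kernel of `fracKreg β ε`, without its prefactor. -/
def fracKernel (β ε : ℝ) (ρ' ρ : Plane) : ℂ :=
  Complex.exp (-(Real.pi * ε * ‖ρ‖ ^ 2 : ℝ)) *
    Complex.exp (-(Complex.I * Real.pi * ‖ρ‖ ^ 2 * Real.tanh β)) *
    Complex.exp (2 * Real.pi * Complex.I * ⟪ρ', ρ⟫ / Real.cosh β)

lemma fracKreg_eq_mul_integral_fracKernel (β ε : ℝ) (f : Plane → ℂ) (ρ' : Plane) :
    fracKreg β ε f ρ' =
      Complex.I * Real.exp β / Real.cosh β *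
        Complex.exp (Complex.I * Real.pi * ‖ρ'‖ ^ 2 * Real.tanh β) *
        ∫ ρ : Plane, fracKernel β ε ρ' ρ * f ρ :=
  rfl

/-- `HasFracK β f g` says that `K_β[f] = g` in the Gaussian-regularized sense. Absolute convergence
of the regularized integrals is part of the notion, as Mathlib's integral of a non-integrable
function is `0`. -/
structure HasFracK (β : ℝ) (f g : Plane → ℂ) : Prop where
  integrable : ∀ ε > 0, ∀ ρ', Integrable fun ρ => fracKernel β ε ρ' ρ * f ρ
  tendsto : ∀ ρ', Tendsto (fun ε : ℝ => fracKreg β ε f ρ') (nhdsWithin 0 (Set.Ioi 0)) (nhds (g ρ'))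

namespace HasFracK

variable {β : ℝ} {f₁ f₂ g₁ g₂ : Plane → ℂ}

lemma const_mul (h : HasFracK β f₁ g₁) (c : ℂ) :
    HasFracK β (fun ρ => c * f₁ ρ) (fun ρ => c * g₁ ρ) where
  integrable ε hε ρ' := by
    simpa only [mul_left_comm] using (h.integrable ε hε ρ').const_mul c
  tendsto ρ' := by
    refine ((h.tendsto ρ').const_mul c).congr fun ε => ?_
    simp only [fracKreg_eq_mul_integral_fracKernel, mul_left_comm _ c, integral_const_mul]

lemma add (h₁ : HasFracK β f₁ g₁) (h₂ : HasFracK β f₂ g₂) :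
    HasFracK β (fun ρ => f₁ ρ + f₂ ρ) (fun ρ => g₁ ρ + g₂ ρ) where
  integrable ε hε ρ' := by
    simp only [mul_add]
    exact (h₁.integrable ε hε ρ').add (h₂.integrable ε hε ρ')
  tendsto ρ' := by
    refine ((h₁.tendsto ρ').add (h₂.tendsto ρ')).congr' ?_
    filter_upwards [self_mem_nhdsWithin] with ε hε
    simp only [fracKreg_eq_mul_integral_fracKernel, mul_add,
      integral_add (h₁.integrable ε hε ρ') (h₂.integrable ε hε ρ')]

end HasFracK

lemma fracKernel_mul_complexGaussian (β ε : ℝ) (a : ℂ) (ρ' ρ : Plane) :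
    fracKernel β ε ρ' ρ * complexGaussian a ρ =
      complexGaussian (ε + (Complex.I * Real.tanh β + a)) ρ *
        Complex.exp (2 * Real.pi * Complex.I * (1 / Real.cosh β) * ⟪ρ', ρ⟫) := by
  simp only [fracKernel, complexGaussian, ← Complex.exp_add]
  push_cast
  ring_nf

lemma re_add_I_mul_tanh_add_pos (β : ℝ) {ε : ℝ} (hε : 0 < ε) {a : ℂ} (ha : 0 ≤ a.re) :
    0 < (ε + (Complex.I * Real.tanh β + a)).re := by
  rw [Complex.add_re, Complex.add_re, Complex.re_mul_ofReal, Complex.I_re, Complex.ofReal_re]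
  linarith

lemma fracKreg_complexGaussian (β : ℝ) {ε : ℝ} (hε : 0 < ε) {a : ℂ} (ha : 0 ≤ a.re) (ρ' : Plane) :
    fracKreg β ε (complexGaussian a) ρ' =
      Complex.I * Real.exp β / Real.cosh β * complexGaussian (-(Complex.I * Real.tanh β)) ρ' *
        (1 / (ε + (Complex.I * Real.tanh β + a)) *
          complexGaussian ((1 / Real.cosh β) ^ 2 / (ε + (Complex.I * Real.tanh β + a))) ρ') := by
  have hint := integral_complexGaussian_mul_planeWave (re_add_I_mul_tanh_add_pos β hε ha)
    (1 / Real.cosh β) ρ'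
  have hdim : (Module.finrank ℝ Plane / 2 : ℂ) = 1 := by simp
  rw [hdim, Complex.cpow_one] at hint
  simp only [← fracKernel_mul_complexGaussian] at hint
  have hphase : Complex.exp (Complex.I * Real.pi * ‖ρ'‖ ^ 2 * Real.tanh β) =
      complexGaussian (-(Complex.I * Real.tanh β)) ρ' := by
    rw [complexGaussian]
    ring_nf
  rw [fracKreg_eq_mul_integral_fracKernel, hint, hphase]

lemma ofReal_cosh_ne_zero (β : ℝ) : (Real.cosh β : ℂ) ≠ 0 :=
  Complex.ofReal_ne_zero.mpr (Real.cosh_pos β).ne'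

lemma I_mul_tanh_add_eq_div (β : ℝ) (a : ℂ) :
    Complex.I * Real.tanh β + a =
      (Real.cosh β * a + Complex.I * Real.sinh β) / Real.cosh β := by
  have hc := ofReal_cosh_ne_zero β
  rw [Real.tanh_eq_sinh_div_cosh, Complex.ofReal_div]
  field_simp
  ring

lemma neg_I_mul_tanh_add_sech_sq_div (β : ℝ) {a : ℂ}
    (hd : Real.cosh β * a + Complex.I * Real.sinh β ≠ 0) :
    -(Complex.I * Real.tanh β) + (1 / Real.cosh β) ^ 2 / (Complex.I * Real.tanh β + a) =
      (Real.cosh β - Complex.I * Real.sinh β * a) /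
        (Real.cosh β * a + Complex.I * Real.sinh β) := by
  have hc := ofReal_cosh_ne_zero β
  have hsq : (Real.cosh β : ℂ) ^ 2 = Real.sinh β ^ 2 + 1 := by exact_mod_cast Real.cosh_sq β
  rw [I_mul_tanh_add_eq_div, Real.tanh_eq_sinh_div_cosh, Complex.ofReal_div]
  field_simp
  linear_combination (-(Real.sinh β : ℂ) ^ 2) * Complex.I_sq - hsq

lemma prefactor_mul_complexGaussian_eq (β : ℝ) {a : ℂ}
    (hd : Real.cosh β * a + Complex.I * Real.sinh β ≠ 0) {E : Type*} [Norm E] (ρ : E) :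
    Complex.I * Real.exp β / Real.cosh β * complexGaussian (-(Complex.I * Real.tanh β)) ρ *
        (1 / (Complex.I * Real.tanh β + a) *
          complexGaussian ((1 / Real.cosh β) ^ 2 / (Complex.I * Real.tanh β + a)) ρ) =
      Complex.I * Real.exp β / (Real.cosh β * a + Complex.I * Real.sinh β) *
        complexGaussian ((Real.cosh β - Complex.I * Real.sinh β * a) /
          (Real.cosh β * a + Complex.I * Real.sinh β)) ρ := by
  have hc := ofReal_cosh_ne_zero β
  rw [mul_mul_mul_comm, complexGaussian_mul, neg_I_mul_tanh_add_sech_sq_div β hd,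
    I_mul_tanh_add_eq_div]
  congr 1
  field_simp

theorem hasFracK_complexGaussian (β : ℝ) {a : ℂ} (ha : 0 ≤ a.re)
    (hd : Real.cosh β * a + Complex.I * Real.sinh β ≠ 0) :
    HasFracK β (complexGaussian a) fun ρ =>
      Complex.I * Real.exp β / (Real.cosh β * a + Complex.I * Real.sinh β) *
        complexGaussian ((Real.cosh β - Complex.I * Real.sinh β * a) /
          (Real.cosh β * a + Complex.I * Real.sinh β)) ρ where
  integrable ε hε ρ' := by
    simp only [fracKernel_mul_complexGaussian]
    exact integrable_complexGaussian_mul_planeWave (re_add_I_mul_tanh_add_pos β hε ha) _ ρ'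
  tendsto ρ' := by
    have hd' : Complex.I * Real.tanh β + a ≠ 0 :=
      I_mul_tanh_add_eq_div β a ▸ div_ne_zero hd (ofReal_cosh_ne_zero β)
    rw [← prefactor_mul_complexGaussian_eq β hd]
    refine ((tendsto_one_div_mul_complexGaussian hd' _ ρ').const_mul _).congr' ?_
    filter_upwards [self_mem_nhdsWithin] with ε hε
    exact (fracKreg_complexGaussian β hε ha ρ').symm

lemma hasFracK_complexGaussian_I (β : ℝ) :
    HasFracK β (complexGaussian Complex.I) (complexGaussian (-Complex.I)) := by
  have he : (Real.exp β : ℂ) ≠ 0 := Complex.ofReal_ne_zero.mpr (Real.exp_pos β).ne'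
  have hexp : (Real.cosh β : ℂ) + Real.sinh β = Real.exp β := by
    exact_mod_cast Real.cosh_add_sinh β
  have hden : (Real.cosh β : ℂ) * Complex.I + Complex.I * Real.sinh β =
      Complex.I * Real.exp β := by
    linear_combination Complex.I * hexp
  have hnum : (Real.cosh β : ℂ) - Complex.I * Real.sinh β * Complex.I = Real.exp β := by
    linear_combination hexp - Real.sinh β * Complex.I_sq
  have hparam : (Real.exp β : ℂ) / (Complex.I * Real.exp β) = -Complex.I := by
    rw [div_mul_cancel_right₀ he, Complex.inv_I]
  have hIe : Complex.I * Real.exp β ≠ 0 := mul_ne_zero Complex.I_ne_zero he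
  have h := hasFracK_complexGaussian β (a := Complex.I) (by simp) (hden ▸ hIe)
  simpa only [hden, hnum, hparam, div_self hIe, one_mul] using h

lemma hasFracK_complexGaussian_neg_I (β : ℝ) :
    HasFracK β (complexGaussian (-Complex.I))
      fun ρ => -(Real.exp β) ^ 2 * complexGaussian Complex.I ρ := by
  have he : (Real.exp (-β) : ℂ) ≠ 0 := Complex.ofReal_ne_zero.mpr (Real.exp_pos (-β)).ne'
  have hexp : (Real.cosh β : ℂ) - Real.sinh β = Real.exp (-β) := by
    exact_mod_cast Real.cosh_sub_sinh β
  have hden : (Real.cosh β : ℂ) * -Complex.I + Complex.I * Real.sinh β =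
      -Complex.I * Real.exp (-β) := by
    linear_combination -Complex.I * hexp
  have hnum : (Real.cosh β : ℂ) - Complex.I * Real.sinh β * -Complex.I = Real.exp (-β) := by
    linear_combination hexp + Real.sinh β * Complex.I_sq
  have hparam : (Real.exp (-β) : ℂ) / (-Complex.I * Real.exp (-β)) = Complex.I := by
    rw [div_mul_cancel_right₀ he, inv_neg, Complex.inv_I, neg_neg]
  have hIe : -Complex.I * Real.exp (-β) ≠ 0 := mul_ne_zero (neg_ne_zero.mpr Complex.I_ne_zero) he
  have hfactor : Complex.I * Real.exp β / (-Complex.I * Real.exp (-β)) =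
      -(Real.exp β : ℂ) ^ 2 := by
    have hinv : (Real.exp β : ℂ) * Real.exp (-β) = 1 := by
      rw [← Complex.ofReal_mul, ← Real.exp_add, add_neg_cancel, Real.exp_zero, Complex.ofReal_one]
    rw [div_eq_iff hIe]
    linear_combination -Complex.I * Real.exp β * hinv
  have h := hasFracK_complexGaussian β (a := -Complex.I) (by simp) (hden ▸ hIe)
  simpa only [hden, hnum, hparam, hfactor] using h

theorem hasFracK_eigenfunction (β : ℝ) {μ : ℂ} (hμ : μ ^ 2 = -(Real.exp β) ^ 2) :
    HasFracK β (fun ρ => μ * complexGaussian Complex.I ρ + complexGaussian (-Complex.I) ρ)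
      fun ρ => μ * (μ * complexGaussian Complex.I ρ + complexGaussian (-Complex.I) ρ) := by
  have h := ((hasFracK_complexGaussian_I β).const_mul μ).add (hasFracK_complexGaussian_neg_I β)
  simpa only [← hμ, mul_add, ← mul_assoc, ← sq, add_comm] using h

/-- `f₋ = (1−i)e^(β/2)·g + (1+i)e^(−β/2)·h` is an eigenfunction of `K_β`
(Gaussian-regularized) with eigenvalue `−i·e^β`. -/
theorem stmt6 (β : ℝ)
    (fm : Plane → ℂ)
    (hfm : ∀ ρ, fm ρ =
      (1 - Complex.I) * Real.exp (β / 2) * Complex.exp (-(Complex.I * Real.pi * ‖ρ‖ ^ 2)) +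
      (1 + Complex.I) * Real.exp (-β / 2) * Complex.exp (Complex.I * Real.pi * ‖ρ‖ ^ 2))
    (ρ' : Plane) :
    Tendsto (fun ε : ℝ => fracKreg β ε fm ρ')
      (nhdsWithin 0 (Set.Ioi 0)) (nhds (-Complex.I * Real.exp β * fm ρ')) := by
  set μ : ℂ := -Complex.I * Real.exp β with hμ_def
  have hμ : μ ^ 2 = -(Real.exp β) ^ 2 := by
    rw [hμ_def, mul_pow, neg_sq, Complex.I_sq, neg_one_mul]
  have hexp : (Real.exp (-β / 2) * Real.exp β : ℂ) = Real.exp (β / 2) := by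
    rw [← Complex.ofReal_mul, ← Real.exp_add]
    ring_nf
  have hfm' : fm = fun ρ => (1 + Complex.I) * Real.exp (-β / 2) *
      (μ * complexGaussian Complex.I ρ + complexGaussian (-Complex.I) ρ) := by
    funext ρ
    rw [hfm, complexGaussian_I, complexGaussian_neg_I, ← hexp]
    linear_combination (Real.exp (-β / 2) * Real.exp β *
      Complex.exp (-(Complex.I * Real.pi * ‖ρ‖ ^ 2)) : ℂ) * Complex.I_sq
  have h := ((hasFracK_eigenfunction β hμ).const_mul
    ((1 + Complex.I) * Real.exp (-β / 2))).tendsto ρ'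
  simpa only [hfm', mul_left_comm μ] using h

end
end

section
/- Let β be a real number and let f ∈ 𝓢(ℝ², ℂ). Then for every ρ'' ∈ ℝ², K_β[K_β[f]](ρ'') = −e^{2β}·f(−ρ''), where the outer transformation K_β is applied to the function ρ' ↦ K_β[f](ρ'). That is, K_β ∘ K_β = −e^{2β}·𝒫, where 𝒫 is the parity operator. -/
open MeasureTheory Filter
open scoped RealInnerProductSpace

noncomputable section

/-- Hyperbolic fractional-order Fourier transformation of the second kind of order `β`. -/
def fracK (β : ℝ) (f : Plane → ℂ) (ρ' : Plane) : ℂ :=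
  Complex.I * Real.exp β / Real.cosh β *
    Complex.exp (Complex.I * Real.pi * ‖ρ'‖ ^ 2 * Real.tanh β) *
    ∫ ρ : Plane,
      Complex.exp (-(Complex.I * Real.pi * ‖ρ‖ ^ 2 * Real.tanh β)) *
      Complex.exp (2 * Real.pi * Complex.I * ⟪ρ', ρ⟫ / Real.cosh β) * f ρ

/-! Up to the scalar `i e^β / cosh β`, the transform `K_β` is `M ∘ S ∘ 𝓕⁻ ∘ M⁻¹`, where `M`
multiplies by the chirp `exp (iπ tanh β ‖ρ‖²)` and `S` is the dilation `h ↦ h ((cosh β)⁻¹ • ·)`. The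
inner chirps cancel in the square, and `(S ∘ 𝓕⁻)²` is `cosh² β` times parity by a change of
variables and Fourier inversion. As the chirp is even, the outer chirps cancel too, leaving the
scalar `(i e^β / cosh β)² cosh² β = -e^(2β)`. -/

open Module (finrank)
open scoped FourierTransform SchwartzMap

section CircleSMul

variable {X E : Type*} [MeasurableSpace X] [NormedAddCommGroup E] [NormedSpace ℂ E]

lemma integrable_circle_smul_iff {μ : Measure X} {u : X → Circle} {f : X → E}
    (hu : AEStronglyMeasurable u μ) : Integrable (fun x ↦ u x • f x) μ ↔ Integrable f μ := by
  have smul_left {w : X → Circle} {g : X → E} (hw : AEStronglyMeasurable w μ)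
      (hg : Integrable g μ) : Integrable (fun x ↦ w x • g x) μ := by
    simpa only [← integrable_norm_iff (hw.fun_smul hg.1), Circle.norm_smul] using hg.norm
  refine ⟨fun h ↦ ?_, smul_left hu⟩
  simpa only [Pi.inv_apply, inv_smul_smul] using smul_left hu.inv h

end CircleSMul

section ImaginaryExponential

lemma iteratedDeriv_cexp_mul_ofReal (n : ℕ) (c : ℂ) :
    iteratedDeriv n (fun x : ℝ ↦ Complex.exp (c * x)) =
      fun x : ℝ ↦ c ^ n * Complex.exp (c * x) := by
  induction n with
  | zero => simp
  | succ n ih =>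
    ext x
    have hderiv : HasDerivAt (fun x : ℝ ↦ c ^ n * Complex.exp (c * x))
        (c ^ n * (Complex.exp (c * x) * (c * 1))) x :=
      ((Complex.ofRealCLM.hasDerivAt.const_mul c).cexp).const_mul (c ^ n)
    rw [iteratedDeriv_succ, ih, hderiv.deriv]
    ring

lemma hasTemperateGrowth_cexp_mul_ofReal {c : ℂ} (hc : c.re = 0) :
    (fun x : ℝ ↦ Complex.exp (c * x)).HasTemperateGrowth := by
  refine ⟨(contDiff_const.mul Complex.ofRealCLM.contDiff).cexp, fun n ↦ ⟨0, ‖c‖ ^ n, fun x ↦ ?_⟩⟩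
  rw [norm_iteratedFDeriv_eq_norm_iteratedDeriv, iteratedDeriv_cexp_mul_ofReal]
  simp [Complex.norm_exp, hc]

end ImaginaryExponential

section Fourier

variable {V E : Type*} [NormedAddCommGroup V] [InnerProductSpace ℝ V] [FiniteDimensional ℝ V]
  [MeasurableSpace V] [BorelSpace V] [NormedAddCommGroup E] [NormedSpace ℂ E]

lemma fourierInv_const_smul (a : ℂ) (f : V → E) (v : V) :
    𝓕⁻ (fun w ↦ a • f w) v = a • 𝓕⁻ f v := by
  simp only [Real.fourierInv_eq', smul_comm _ a, integral_smul]

lemma fourierInv_comp_inv_smul (f : V → E) (c : ℝ) (v : V) :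
    𝓕⁻ (fun w ↦ f (c⁻¹ • w)) (c⁻¹ • v) = |c ^ finrank ℝ V| • 𝓕⁻ f v := by
  simp only [Real.fourierInv_eq, real_inner_smul_right, ← real_inner_smul_left]
  exact Measure.integral_comp_inv_smul volume (fun u ↦ Real.fourierChar ⟪u, v⟫ • f u) c

lemma fourierInv_fourierInv_eq [CompleteSpace E] {f : V → E} {v : V} (hf : Integrable f)
    (hf' : Integrable (𝓕⁻ f)) (hv : ContinuousAt f (-v)) : 𝓕⁻ (𝓕⁻ f) v = f (-v) := by
  have hfourier : Integrable (𝓕 f) := by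
    simpa only [Real.fourierInv_eq_fourier_neg, neg_neg] using hf'.comp_neg
  rw [Real.fourierInv_eq_fourier_neg, hf.fourier_fourierInv_eq hfourier hv]

end Fourier

section Chirp

variable {V : Type*} [NormedAddCommGroup V]

/-- The chirp (quadratic phase) `v ↦ exp (iπ t ‖v‖²)` of rate `t`, by which `fracK` multiplies
before and after its Fourier integral. It takes values in `Circle` so that it is invertible and
preserves norms. -/
def chirp (t : ℝ) (v : V) : Circle := Circle.exp (Real.pi * t * ‖v‖ ^ 2)

lemma coe_chirp (t : ℝ) (v : V) :
    (chirp t v : ℂ) = Complex.exp (Complex.I * Real.pi * ‖v‖ ^ 2 * t) := by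
  rw [chirp, Circle.coe_exp]
  push_cast
  ring_nf

lemma chirp_neg_left (t : ℝ) (v : V) : chirp (-t) v = (chirp t v)⁻¹ := by
  simp only [chirp, mul_neg, neg_mul, Circle.exp_neg]

lemma chirp_neg_right (t : ℝ) (v : V) : chirp t (-v) = chirp t v := by
  simp only [chirp, norm_neg]

lemma continuous_chirp (t : ℝ) : Continuous (chirp t : V → Circle) :=
  Circle.exp.continuous.comp (by fun_prop)

lemma hasTemperateGrowth_chirp [InnerProductSpace ℝ V] (t : ℝ) :
    (fun v : V ↦ (chirp t v : ℂ)).HasTemperateGrowth := by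
  have hcomp : (fun v : V ↦ (chirp t v : ℂ)) =
      (fun x : ℝ ↦ Complex.exp (Complex.I * Real.pi * t * x)) ∘ fun v ↦ ‖v‖ ^ 2 := by
    ext v
    rw [coe_chirp, Function.comp_apply]
    push_cast
    ring_nf
  rw [hcomp]
  exact (hasTemperateGrowth_cexp_mul_ofReal (by simp)).comp
    (Function.hasTemperateGrowth_norm_sq V)

end Chirp

section ChirpFourierInv

variable {V E : Type*} [NormedAddCommGroup V] [InnerProductSpace ℝ V] [FiniteDimensional ℝ V]
  [MeasurableSpace V] [BorelSpace V] [NormedAddCommGroup E] [NormedSpace ℂ E]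

/-- The inverse Fourier transform dilated by `c` and conjugated by the chirp of rate `t`: the
operator `K_β` without its scalar factor, for `t = tanh β` and `c = cosh β`. -/
def chirpFourierInv (t c : ℝ) (f : V → E) (v : V) : E :=
  chirp t v • 𝓕⁻ (fun w ↦ chirp (-t) w • f w) (c⁻¹ • v)

lemma chirpFourierInv_const_smul (t c : ℝ) (a : ℂ) (f : V → E) (v : V) :
    chirpFourierInv t c (fun w ↦ a • f w) v = a • chirpFourierInv t c f v := by
  simp only [chirpFourierInv, smul_comm _ a, fourierInv_const_smul]

lemma integrable_chirpFourierInv_iff {t c : ℝ} (hc : c ≠ 0) {f : V → E} :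
    Integrable (chirpFourierInv t c f) ↔ Integrable (𝓕⁻ fun w ↦ chirp (-t) w • f w) := by
  unfold chirpFourierInv
  rw [integrable_circle_smul_iff (continuous_chirp t).aestronglyMeasurable,
    integrable_comp_smul_iff volume _ (inv_ne_zero hc)]

theorem chirpFourierInv_chirpFourierInv [CompleteSpace E] {t c : ℝ} (hc : c ≠ 0) {f : V → E} {v : V}
    (hf : Integrable f) (hf' : Integrable (chirpFourierInv t c f)) (hv : ContinuousAt f (-v)) :
    chirpFourierInv t c (chirpFourierInv t c f) v = |c ^ finrank ℝ V| • f (-v) := by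
  set g : V → E := fun w ↦ chirp (-t) w • f w
  have hg : Integrable g :=
    (integrable_circle_smul_iff (continuous_chirp (-t)).aestronglyMeasurable).mpr hf
  have hg' : Integrable (𝓕⁻ g) := (integrable_chirpFourierInv_iff hc).mp hf'
  have hgv : ContinuousAt g (-v) := (continuous_chirp (-t)).continuousAt.smul hv
  calc chirpFourierInv t c (chirpFourierInv t c f) v
      = chirp t v • 𝓕⁻ (fun w ↦ 𝓕⁻ g (c⁻¹ • w)) (c⁻¹ • v) := by
        simp only [chirpFourierInv, chirp_neg_left, inv_smul_smul, g]
    _ = chirp t v • |c ^ finrank ℝ V| • g (-v) := by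
        rw [fourierInv_comp_inv_smul, fourierInv_fourierInv_eq hg hg' hgv]
    _ = |c ^ finrank ℝ V| • f (-v) := by
        simp only [g, chirp_neg_left, chirp_neg_right]
        rw [smul_comm, smul_inv_smul]

lemma integrable_chirpFourierInv_schwartz {t c : ℝ} (hc : c ≠ 0) (f : 𝓢(V, E)) :
    Integrable (chirpFourierInv t c f) := by
  set g : 𝓢(V, E) := SchwartzMap.smulLeftCLM E (fun v ↦ (chirp (-t) v : ℂ)) f
  have hg : (fun w ↦ chirp (-t) w • f w) = g := by
    ext w
    rw [SchwartzMap.smulLeftCLM_apply_apply (hasTemperateGrowth_chirp (-t)), Circle.smul_def]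
  rw [integrable_chirpFourierInv_iff hc, hg, ← SchwartzMap.fourierInv_coe]
  exact (𝓕⁻ g).integrable

end ChirpFourierInv

section FracK

lemma fracK_eq_smul_chirpFourierInv (β : ℝ) (f : Plane → ℂ) (ρ' : Plane) :
    fracK β f ρ' = (Complex.I * Real.exp β / Real.cosh β) •
      chirpFourierInv (Real.tanh β) (Real.cosh β) f ρ' := by
  have hkernel (ρ : Plane) : 2 * Real.pi * Complex.I * ⟪ρ', ρ⟫ / Real.cosh β =
      ↑(2 * Real.pi * ⟪ρ, (Real.cosh β)⁻¹ • ρ'⟫) * Complex.I := by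
    rw [real_inner_smul_right, real_inner_comm]
    push_cast
    ring
  simp only [fracK, chirpFourierInv, Real.fourierInv_eq', chirp_neg_left, Circle.smul_def,
    Circle.coe_inv, coe_chirp, ← Complex.exp_neg, smul_eq_mul, hkernel]
  rw [mul_assoc]
  simp only [mul_assoc, mul_left_comm (Complex.exp (-_))]

lemma integrable_fracK_iff {β : ℝ} {f : Plane → ℂ} :
    Integrable (fracK β f) ↔
      Integrable (chirpFourierInv (Real.tanh β) (Real.cosh β) f) := by
  have hscalar : Complex.I * Real.exp β / Real.cosh β ≠ 0 :=
    div_ne_zero (mul_ne_zero Complex.I_ne_zero (Complex.ofReal_ne_zero.mpr (Real.exp_ne_zero β)))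
      (Complex.ofReal_ne_zero.mpr (Real.cosh_pos β).ne')
  rw [funext (fracK_eq_smul_chirpFourierInv β f)]
  exact integrable_smul_iff hscalar _

lemma integrable_fracK_schwartz (β : ℝ) (f : 𝓢(Plane, ℂ)) : Integrable (fracK β f) :=
  integrable_fracK_iff.mpr (integrable_chirpFourierInv_schwartz (Real.cosh_pos β).ne' f)

theorem stmt9_general {β : ℝ} {f : Plane → ℂ} {ρ'' : Plane} (hf : Integrable f)
    (hKf : Integrable (fracK β f)) (hρ'' : ContinuousAt f (-ρ'')) :
    fracK β (fracK β f) ρ'' = -(Real.exp (2 * β)) * f (-ρ'') := by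
  have hcosh : Real.cosh β ≠ 0 := (Real.cosh_pos β).ne'
  set a : ℂ := Complex.I * Real.exp β / Real.cosh β with ha
  have hscalar : a * (a * (Real.cosh β : ℂ) ^ 2) = -(Real.exp (2 * β)) := by
    rw [← mul_assoc, ← sq, ← mul_pow, ha, div_mul_cancel₀ _ (mod_cast hcosh), mul_pow,
      Complex.I_sq, neg_one_mul, ← Complex.ofReal_pow, ← Real.exp_nat_mul, Nat.cast_two]
  let T : (Plane → ℂ) → Plane → ℂ := chirpFourierInv (Real.tanh β) (Real.cosh β)
  have hTT : T (T f) ρ'' = Real.cosh β ^ 2 • f (-ρ'') := by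
    have h := chirpFourierInv_chirpFourierInv hcosh hf (integrable_fracK_iff.mp hKf) hρ''
    rwa [finrank_euclideanSpace_fin, abs_of_nonneg (sq_nonneg _)] at h
  calc fracK β (fracK β f) ρ''
      = a • a • T (T f) ρ'' := by
        rw [funext (fracK_eq_smul_chirpFourierInv β f), fracK_eq_smul_chirpFourierInv,
          chirpFourierInv_const_smul]
    _ = a • a • Real.cosh β ^ 2 • f (-ρ'') := by rw [hTT]
    _ = a * (a * (Real.cosh β : ℂ) ^ 2) * f (-ρ'') := by
        simp only [Complex.real_smul, Complex.ofReal_pow, smul_eq_mul, mul_assoc]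
    _ = -(Real.exp (2 * β)) * f (-ρ'') := by rw [hscalar]

end FracK

/-- `K_β ∘ K_β = −e^(2β)·𝒫`, where `𝒫` is the parity operator. -/
theorem stmt9 (β : ℝ) (f : SchwartzMap Plane ℂ) (ρ'' : Plane) :
    fracK β (fun ρ' => fracK β (⇑f) ρ') ρ'' = -(Real.exp (2 * β)) * f (-ρ'') :=
  stmt9_general f.integrable (integrable_fracK_schwartz β f) f.continuous.continuousAt

end
end
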